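/- For every n ≥ 1 and every strictly increasing integer sequence k_1 < k_2 < ⋯ < k_n, the set 𝒢_n(k_1,…,k_n) of Generalized Monotone Triangles with bottom row (k_1,…,k_n) is equal to the set of Monotone Triangles with bottom row (k_1,…,k_n), and every element A of this set satisfies sc(A) = 0 (it contains no newcomers and no sign-changing pairs). -/

import Mathlib

/-- A triangular array of size `n`, encoded as a function `ℕ → ℕ → ℤ` whose
meaningful entries are `a i j` for `1 ≤ j ≤ i ≤ n` (row `i` has entries
`a i 1, …, a i i`), normalized to be `0` outside this region. -/
def IsTri (n : ℕ) (a : ℕ → ℕ → ℤ) : Prop :=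
  ∀ i j, ¬ (1 ≤ j ∧ j ≤ i ∧ i ≤ n) → a i j = 0

/-- A Monotone Triangle of size `n`: strict increase along rows and weak
increase along North-East and South-East diagonals. -/
def IsMT (n : ℕ) (a : ℕ → ℕ → ℤ) : Prop :=
  IsTri n a ∧
  (∀ i j, 1 ≤ j → j + 1 ≤ i → i ≤ n → a i j < a i (j + 1)) ∧
  (∀ i j, 1 ≤ j → j ≤ i → i + 1 ≤ n →
    a (i + 1) j ≤ a i j ∧ a i j ≤ a (i + 1) (j + 1))

/-- A Generalized Monotone Triangle (GMT) of size `n`. -/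
def IsGMT (n : ℕ) (a : ℕ → ℕ → ℤ) : Prop :=
  IsTri n a ∧
  -- (1) each entry is weakly bounded by its SW- and SE-neighbour
  (∀ i j, 1 ≤ j → j ≤ i → i + 1 ≤ n →
    min (a (i + 1) j) (a (i + 1) (j + 1)) ≤ a i j ∧
    a i j ≤ max (a (i + 1) j) (a (i + 1) (j + 1))) ∧
  -- (2) three weakly increasing consecutive entries force strict increase above
  (∀ i j, 1 ≤ j → j + 1 ≤ i → i + 1 ≤ n →
    a (i + 1) j ≤ a (i + 1) (j + 1) → a (i + 1) (j + 1) ≤ a (i + 1) (j + 2) →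
    a i j < a i (j + 1)) ∧
  -- (3) equality over a strict descent forces an equal neighbour
  (∀ i j, 1 ≤ j → j ≤ i → i + 1 ≤ n →
    (a i j = a (i + 1) j → a (i + 1) (j + 1) < a (i + 1) j →
      2 ≤ j ∧ a i (j - 1) = a i j) ∧
    (a (i + 1) (j + 1) < a (i + 1) j → a (i + 1) (j + 1) = a i j →
      j + 1 ≤ i ∧ a i (j + 1) = a i j))

/-- The bottom row of a triangular array of size `n` is `(k 0, …, k (n-1))`
(1-indexed in the array). -/
def BottomRow (n : ℕ) (a : ℕ → ℕ → ℤ) (k : Fin n → ℤ) : Prop :=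
  ∀ j : Fin n, a n (j.1 + 1) = k j

/-- The set of Monotone Triangles of size `n` with bottom row `k`. -/
def MTset (n : ℕ) (k : Fin n → ℤ) : Set (ℕ → ℕ → ℤ) :=
  {a | IsMT n a ∧ BottomRow n a k}

/-- The set `𝒢ₙ(k)` of Generalized Monotone Triangles of size `n` with bottom row `k`. -/
def GMTset (n : ℕ) (k : Fin n → ℤ) : Set (ℕ → ℕ → ℤ) :=
  {a | IsGMT n a ∧ BottomRow n a k}

/-- The positions `(i, j)` of newcomers of a triangular array:
`a (i+1) j > a i j > a (i+1) (j+1)`. -/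
def newcomersF (n : ℕ) (a : ℕ → ℕ → ℤ) : Finset (ℕ × ℕ) :=
  ((Finset.range (n + 1)) ×ˢ (Finset.range (n + 1))).filter (fun p =>
    1 ≤ p.2 ∧ p.2 ≤ p.1 ∧ p.1 + 1 ≤ n ∧
    a p.1 p.2 < a (p.1 + 1) p.2 ∧ a (p.1 + 1) (p.2 + 1) < a p.1 p.2)

/-- The positions `(i, j)` of sign-changing pairs `(a i j, a i (j+1))` of a
triangular array: two equal consecutive entries whose interlaced neighbour
below is also equal to them. -/
def scPairsF (n : ℕ) (a : ℕ → ℕ → ℤ) : Finset (ℕ × ℕ) :=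
  ((Finset.range (n + 1)) ×ˢ (Finset.range (n + 1))).filter (fun p =>
    1 ≤ p.2 ∧ p.2 + 1 ≤ p.1 ∧ p.1 + 1 ≤ n ∧
    a p.1 p.2 = a p.1 (p.2 + 1) ∧ a (p.1 + 1) (p.2 + 1) = a p.1 p.2)

/-- `sc(A)`: the total number of newcomers and sign-changing pairs of `A`. -/
def scT (n : ℕ) (a : ℕ → ℕ → ℤ) : ℕ :=
  (newcomersF n a).card + (scPairsF n a).card

/-- Every row of a generalized monotone triangle with strictly increasing bottom row is
strictly increasing. -/
theorem IsGMT.row_strict {n : ℕ} {a : ℕ → ℕ → ℤ} (h : IsGMT n a)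
    (hbot : ∀ j, 1 ≤ j → j + 1 ≤ n → a n j < a n (j + 1)) (i : ℕ) (hi : i ≤ n) :
    ∀ j, 1 ≤ j → j + 1 ≤ i → a i j < a i (j + 1) := by
  induction hi using Nat.decreasingInduction with
  | self => exact hbot
  | of_succ i hi ih =>
    intro j hj hji
    exact h.2.2.1 i j hj hji hi (ih j hj (by lia)).le (ih (j + 1) (by lia) (by lia)).le

/-- A generalized monotone triangle with strictly increasing bottom row is a monotone triangle. -/
theorem IsGMT.isMT {n : ℕ} {a : ℕ → ℕ → ℤ} (h : IsGMT n a)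
    (hbot : ∀ j, 1 ≤ j → j + 1 ≤ n → a n j < a n (j + 1)) : IsMT n a := by
  refine ⟨h.1, fun i j hj hji hi => h.row_strict hbot i hi j hj hji, fun i j hj hji hi => ?_⟩
  have hlt := h.row_strict hbot (i + 1) hi j hj (by lia)
  have hb := h.2.1 i j hj hji hi
  rwa [min_eq_left hlt.le, max_eq_right hlt.le] at hb

/-- Every monotone triangle is a generalized monotone triangle. -/
theorem IsMT.isGMT {n : ℕ} {a : ℕ → ℕ → ℤ} (h : IsMT n a) : IsGMT n a := by
  obtain ⟨htri, hrow, hdiag⟩ := h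
  refine ⟨htri, fun i j hj hji hi => ?_, fun i j hj hji hi _ _ => hrow i j hj hji (by lia),
    fun i j hj hji hi => ?_⟩
  · exact ⟨min_le_of_left_le (hdiag i j hj hji hi).1, le_max_of_le_right (hdiag i j hj hji hi).2⟩
  · have hlt := hrow (i + 1) j hj (by lia) hi
    exact ⟨fun _ hdesc => absurd hdesc hlt.not_gt, fun hdesc => absurd hdesc hlt.not_gt⟩

/-- A monotone triangle has no newcomers and no sign-changing pairs. -/
theorem IsMT.scT_eq_zero {n : ℕ} {a : ℕ → ℕ → ℤ} (h : IsMT n a) : scT n a = 0 := by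
  obtain ⟨-, hrow, hdiag⟩ := h
  have hnew : newcomersF n a = ∅ := by
    refine Finset.filter_eq_empty_iff.2 fun p _ hp => ?_
    obtain ⟨hj, hji, hi, hlt, -⟩ := hp
    exact hlt.not_ge (hdiag p.1 p.2 hj hji hi).1
  have hpairs : scPairsF n a = ∅ := by
    refine Finset.filter_eq_empty_iff.2 fun p _ hp => ?_
    obtain ⟨hj, hji, hi, heq, -⟩ := hp
    exact (hrow p.1 p.2 hj hji (by lia)).ne heq
  simp [scT, hnew, hpairs]

/-- A strictly increasing `k` yields a strictly increasing bottom row of the array. -/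
theorem BottomRow.strict {n : ℕ} {a : ℕ → ℕ → ℤ} {k : Fin n → ℤ} (h : BottomRow n a k)
    (hk : StrictMono k) (j : ℕ) (hj : 1 ≤ j) (hjn : j + 1 ≤ n) : a n j < a n (j + 1) := by
  obtain ⟨m, rfl⟩ := Nat.exists_eq_add_of_le' hj
  have hleft := h ⟨m, by lia⟩
  have hright := h ⟨m + 1, by lia⟩
  simp only at hleft hright
  rw [hleft, hright]
  exact hk (by simp)

/-- For every `n ≥ 1` and every strictly increasing `k`, the set of Generalized
Monotone Triangles with bottom row `k` equals the set of Monotone Triangles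
with bottom row `k`, and every element has `sc(A) = 0`. -/
theorem GMT_eq_MT_of_strictMono (n : ℕ) (hn : 1 ≤ n)
    (k : Fin n → ℤ) (hk : StrictMono k) :
    GMTset n k = MTset n k ∧ ∀ a ∈ GMTset n k, scT n a = 0 := by
  have hMT : ∀ a ∈ GMTset n k, IsMT n a := fun a ha => ha.1.isMT (ha.2.strict hk)
  refine ⟨Set.ext fun a => ⟨fun ha => ⟨hMT a ha, ha.2⟩, fun ha => ⟨ha.1.isGMT, ha.2⟩⟩, ?_⟩
  exact fun a ha => (hMT a ha).scT_eq_zero
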